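/- Let r>0 and let α_0>0, β_0>0, γ_0>0 be such that β_0 = -c_m·α_0 - c_m^2 for some integer m≥1, where c_m = -(π/r)^2·((2m-1)/4)^2. Consider the metric space M = C([-r,r],ℝ) × ℝ^3, where C([-r,r],ℝ) carries the supremum norm, and let S ⊆ M be the set of all tuples (x, α, β, γ) with α,β,γ > 0 such that x is four times continuously differentiable, not identically zero, satisfies the boundary conditions x'(-r) = x'''(-r) = 0, x(r) = x''(r) = 0, and satisfies x'''' + α·x'' + β·x - γ·x^3 - 3·(x'')^3 - 12·x'·x''·x''' - 3·(x')^2·(x'''' - (α/2)·x'') = 0 on [-r,r]. Then there exists a connected subset C of M with (0, α_0, β_0, γ_0) ∈ C, C \ {(0, α_0, β_0, γ_0)} ⊆ S, and C ≠ {(0, α_0, β_0, γ_0)}. (The point (0, α_0, β_0, γ_0) is a branching point: a continuum of nontrivial solutions emanates from it.) -/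

import Mathlib

open Real Set

/-!
Let `K` be the solution operator of `w'' = f`, `w'(-r) = 0`, `w(r) = 0`. Writing `x = K² u` with
`u = x''''` absorbs the boundary conditions and turns the equation into
`(1 + α K + β K²) u = N(u, α)` with `N` cubic in `u`. The relation `β₀ = -c_m α₀ - c_m²` says that
the pencil at `(α₀, β₀)` factors as `(1 + μ² K)(1 + ν² K)` with `μ² = -c_m`, and `cos (μ (t + r))`
lies in its kernel.

The kernel is two-dimensional when `cos (ν (t + r))` is a second resonant mode, so `u`, `α` and `β`
are all taken as unknowns. Dividing the equation for `ε u` by `ε` leaves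
`(1 + α K + β K²) u = ε² N(u, α)`, whose linearization at `ε = 0`, `u = e` is onto, with a bounded
right inverse, once `K e` and `K² e` fill up the complement of the range of the pencil. This holds
for `e` the first mode, or the sum of the two modes if they differ. The implicit function theorem
gives a curve `ε ↦ (u, α, β)`, and `ε ↦ (K² (ε u), α, β, γ₀)` traces the continuum.
-/

open Filter Topology

section BranchFromCurve

variable {X : Type*} [TopologicalSpace X]

theorem exists_isConnected_of_eventually_mem {Γ : ℝ → X} {S : Set X}
    (hcont : ∀ᶠ ε in 𝓝 0, ContinuousAt Γ ε) (hmem : ∀ᶠ ε in 𝓝[≠] 0, Γ ε ∈ S)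
    (hΓ₀ : Γ 0 ∉ S) :
    ∃ C : Set X, IsConnected C ∧ Γ 0 ∈ C ∧ C \ {Γ 0} ⊆ S ∧ C ≠ {Γ 0} := by
  obtain ⟨δ, hδ, hball⟩ := Metric.eventually_nhds_iff_ball.1
    (hcont.and (eventually_nhdsWithin_iff.1 hmem))
  have h₀ : (0 : ℝ) ∈ Metric.ball 0 δ := Metric.mem_ball_self hδ
  refine ⟨Γ '' Metric.ball 0 δ, ?_, mem_image_of_mem Γ h₀, ?_, ?_⟩
  · exact (Metric.isConnected_ball hδ).image Γ
      fun ε hε ↦ (hball ε hε).1.continuousWithinAt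
  · rintro _ ⟨⟨ε, hε, rfl⟩, hne⟩
    exact (hball ε hε).2 fun h ↦ hne (congrArg Γ h)
  · intro hC
    have hhalf : δ / 2 ∈ Metric.ball (0 : ℝ) δ := by
      rw [mem_ball_zero_iff, norm_of_nonneg (by positivity)]
      exact half_lt_self hδ
    have hS : Γ (δ / 2) ∈ S := (hball _ hhalf).2 (half_pos hδ).ne'
    have heq : Γ (δ / 2) = Γ 0 := hC.subset (mem_image_of_mem Γ hhalf)
    exact hΓ₀ (heq ▸ hS)

end BranchFromCurve

section ImplicitFunction

variable {P Z E : Type*} [NormedAddCommGroup P] [NormedSpace ℝ P] [CompleteSpace P]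
  [NormedAddCommGroup Z] [NormedSpace ℝ Z] [NormedAddCommGroup E] [NormedSpace ℝ E]
  [CompleteSpace E]

theorem exists_contDiffAt_zeros_of_rightInverse {F : P × Z → E} {p₀ : P} {z₀ : Z}
    {L : Z →L[ℝ] E} {R : E →L[ℝ] Z} (hF : ContDiffAt ℝ 1 F (p₀, z₀)) (hF₀ : F (p₀, z₀) = 0)
    (hL : HasFDerivAt (fun z ↦ F (p₀, z)) L z₀) (hR : ∀ f, L (R f) = f) :
    ∃ z : P → Z, ContDiffAt ℝ 1 z p₀ ∧ z p₀ = z₀ ∧ ∀ᶠ p in 𝓝 p₀, F (p, z p) = 0 := by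
  -- On the slice `z₀ + range R` the partial derivative becomes the identity of `E`.
  set G : P × E → E := fun v ↦ F (v.1, z₀ + R v.2) with hGdef
  have hG : ContDiffAt ℝ 1 G (p₀, 0) := by
    have hslice : ContDiffAt ℝ 1 (fun v : P × E ↦ (v.1, z₀ + R v.2)) (p₀, 0) := by fun_prop
    exact ContDiffAt.comp (p₀, (0 : E)) (by simpa using hF) hslice
  have hG' : fderiv ℝ G (p₀, 0) ∘L .inr ℝ P E = .id ℝ E := by
    have hslice : HasFDerivAt (fun f ↦ G (p₀, f)) (L ∘L R) 0 :=
      HasFDerivAt.comp (0 : E) (g := fun z ↦ F (p₀, z)) (by simpa using hL)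
        (R.hasFDerivAt.const_add z₀)
    have hchain : HasFDerivAt (fun f ↦ G (p₀, f)) (fderiv ℝ G (p₀, 0) ∘L .inr ℝ P E) 0 :=
      (hG.differentiableAt one_ne_zero).hasFDerivAt.comp 0 (hasFDerivAt_prodMk_right p₀ 0)
    rw [hchain.unique hslice]
    exact ContinuousLinearMap.ext hR
  have hinv : (fderiv ℝ G (p₀, 0) ∘L .inr ℝ P E).IsInvertible :=
    ⟨.refl ℝ E, by rw [hG']; rfl⟩
  refine ⟨fun p ↦ z₀ + R (hG.implicitFunction one_ne_zero hinv p), ?_, ?_, ?_⟩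
  · exact contDiffAt_const.add
      (R.contDiff.contDiffAt.comp p₀ (hG.contDiffAt_implicitFunction one_ne_zero hinv))
  · simp only [hG.implicitFunction_apply_self one_ne_zero hinv, map_zero, add_zero]
  · filter_upwards [hG.eventually_apply_implicitFunction one_ne_zero hinv] with p hp
    simpa [hGdef, hF₀] using hp

end ImplicitFunction

section Pencil

variable {E : Type*} [NormedAddCommGroup E] [NormedSpace ℝ E]

/-- The quadratic operator pencil `1 + α K + β K²`. For a right inverse `K` of the second
derivative, its value at `u` is `x'''' + α x'' + β x` for `x = K² u`. -/
def pencil (K : E →L[ℝ] E) (α β : ℝ) : E →L[ℝ] E := 1 + α • K + β • K ^ 2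

@[simp]
theorem pencil_apply (K : E →L[ℝ] E) (α β : ℝ) (u : E) :
    pencil K α β u = u + α • K u + β • K (K u) := by
  simp [pencil, sq]

theorem pencil_add_mul_apply (K : E →L[ℝ] E) (s t : ℝ) (u : E) :
    pencil K (s + t) (s * t) u = (1 + s • K) ((1 + t • K) u) := by
  simp only [pencil_apply, add_apply, one_apply_eq_self, smul_apply, map_add, map_smul]
  module

/-- `e` is a nonzero kernel vector of the pencil at `(α, β)`, and the pencil together with its
parameter derivatives `K e` and `K² e` at `e` has a bounded linear right inverse. -/
structure IsTransversalKernelVector (K : E →L[ℝ] E) (α β : ℝ) (e : E) : Prop where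
  ne_zero : e ≠ 0
  pencil_eq_zero : pencil K α β e = 0
  exists_rightInverse : ∃ (W : E →L[ℝ] E) (a b : E →L[ℝ] ℝ),
    ∀ f, pencil K α β (W f) + a f • K e + b f • K (K e) = f

/-- `c` is a nonzero kernel vector of `1 + s K`, and every `f` becomes solvable for `1 + s K` after
subtracting a multiple of `c`, both the multiple and the solution being bounded linear in `f`. -/
structure IsSplitKernelVector (K : E →L[ℝ] E) (s : ℝ) (c : E) : Prop where
  ne_zero : c ≠ 0
  add_smul_eq_zero : (1 + s • K) c = 0
  exists_rightInverse : ∃ (R : E →L[ℝ] E) (φ : E →L[ℝ] ℝ), ∀ f, (1 + s • K) (R f) = f - φ f • c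

variable {K : E →L[ℝ] E} {s t α β : ℝ} {c d e : E}

theorem IsTransversalKernelVector.apply_apply_ne_zero (h : IsTransversalKernelVector K α β e) :
    K (K e) ≠ 0 := by
  intro hKK
  have he : e + α • K e = 0 := by simpa [hKK] using h.pencil_eq_zero
  have hK : K e = 0 := by simpa [hKK] using congrArg K he
  exact h.ne_zero (by simpa [hK] using he)

theorem apply_eq_of_add_smul_eq_zero (hs : s ≠ 0) (hc : (1 + s • K) c = 0) :
    K c = -s⁻¹ • c := by
  have hsK : s • K c = -c := eq_neg_of_add_eq_zero_right (by simpa using hc)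
  rw [neg_smul, ← smul_neg, ← hsK, inv_smul_smul₀ hs]

theorem IsSplitKernelVector.isTransversal_of_pencil (hc : IsSplitKernelVector K s c) (hs : s ≠ 0)
    {W : E →L[ℝ] E} {φ : E →L[ℝ] ℝ}
    (hW : ∀ f, pencil K (s + t) (s * t) (W f) = f - φ f • c) :
    IsTransversalKernelVector K (s + t) (s * t) c where
  ne_zero := hc.ne_zero
  pencil_eq_zero := by
    rw [mul_comm, add_comm, pencil_add_mul_apply, hc.add_smul_eq_zero, map_zero]
  exists_rightInverse := by
    refine ⟨W, 0, s ^ 2 • φ, fun f ↦ ?_⟩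
    simp only [hW, apply_eq_of_add_smul_eq_zero hs hc.add_smul_eq_zero, map_smul,
      zero_apply, smul_apply, smul_eq_mul]
    match_scalars
    · ring
    · field_simp
      ring

theorem IsSplitKernelVector.isTransversal_of_rightInverse (hc : IsSplitKernelVector K s c)
    (hs : s ≠ 0) {R : E →L[ℝ] E} (hR : ∀ f, (1 + t • K) (R f) = f) :
    IsTransversalKernelVector K (s + t) (s * t) c := by
  obtain ⟨R', φ, hR'⟩ := hc.exists_rightInverse
  refine hc.isTransversal_of_pencil hs (W := R ∘L R') (φ := φ) fun f ↦ ?_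
  rw [pencil_add_mul_apply, ContinuousLinearMap.comp_apply, hR, hR']

theorem IsSplitKernelVector.isTransversal_self (hc : IsSplitKernelVector K s c) (hs : s ≠ 0) :
    IsTransversalKernelVector K (s + s) (s * s) c := by
  obtain ⟨R, φ, hR⟩ := hc.exists_rightInverse
  refine hc.isTransversal_of_pencil hs (W := R ∘L R) (φ := φ) fun f ↦ ?_
  simp only [pencil_add_mul_apply, ContinuousLinearMap.comp_apply, hR, map_sub, map_smul,
    hc.add_smul_eq_zero, smul_zero, sub_zero]

theorem IsSplitKernelVector.add_ne_zero (hc : IsSplitKernelVector K s c)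
    (hd : IsSplitKernelVector K t d) (hst : s ≠ t) : c + d ≠ 0 := by
  intro h
  have hd' : (1 + t • K) c = 0 := by
    rw [eq_neg_of_add_eq_zero_left h, map_neg, hd.add_smul_eq_zero, neg_zero]
  have hKc : (s - t) • K c = 0 := by
    simpa [sub_smul] using congrArg₂ (· - ·) hc.add_smul_eq_zero hd'
  have hK : K c = 0 := (smul_eq_zero.1 hKc).resolve_left (sub_ne_zero.2 hst)
  exact hc.ne_zero (by simpa [hK] using hc.add_smul_eq_zero)

theorem IsSplitKernelVector.isTransversal_add (hc : IsSplitKernelVector K s c)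
    (hd : IsSplitKernelVector K t d) (hs : s ≠ 0) (ht : t ≠ 0) (hst : s ≠ t) :
    IsTransversalKernelVector K (s + t) (s * t) (c + d) where
  ne_zero := hc.add_ne_zero hd hst
  pencil_eq_zero := by
    rw [map_add, pencil_add_mul_apply K s t d, hd.add_smul_eq_zero, mul_comm, add_comm s,
      pencil_add_mul_apply, hc.add_smul_eq_zero, map_zero, map_zero, add_zero]
  exists_rightInverse := by
    obtain ⟨R, φ, hR⟩ := hc.exists_rightInverse
    obtain ⟨R', ψ, hR'⟩ := hd.exists_rightInverse
    have hKc := apply_eq_of_add_smul_eq_zero hs hc.add_smul_eq_zero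
    have hKd := apply_eq_of_add_smul_eq_zero ht hd.add_smul_eq_zero
    -- The defect `φ c + χ d` is a combination of `K (c + d) = -(c/s + d/t)` and
    -- `K² (c + d) = c/s² + d/t²` because `s ≠ t`.
    let χ : E →L[ℝ] ℝ := (1 - s * t⁻¹) • ψ ∘L R
    let a : E →L[ℝ] ℝ := (t - s)⁻¹ • (s ^ 2 • φ - t ^ 2 • χ)
    have hχ : ∀ f, pencil K (s + t) (s * t) (R' (R f)) = f - φ f • c - χ f • d := fun f ↦ by
      have hd' : (1 + s • K) d = (1 - s * t⁻¹) • d := by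
        simp only [add_apply, one_apply_eq_self,
          smul_apply, hKd]
        module
      rw [pencil_add_mul_apply, hR', map_sub, hR, map_smul, hd']
      simp only [χ, smul_apply, ContinuousLinearMap.comp_apply]
      module
    refine ⟨R' ∘L R, a, s ^ 2 • φ + s • a, fun f ↦ ?_⟩
    have hts : t - s ≠ 0 := sub_ne_zero.2 hst.symm
    have ha : a f = (t - s)⁻¹ * (s ^ 2 * φ f - t ^ 2 * χ f) := by simp [a]
    simp only [ContinuousLinearMap.comp_apply, hχ, map_add, map_smul, hKc, hKd,
      add_apply, smul_apply, ha, smul_eq_mul]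
    match_scalars <;> field_simp <;> ring

end Pencil

section Branch

variable {E : Type*} [NormedAddCommGroup E] [NormedSpace ℝ E]
  {K : E →L[ℝ] E} {α β : ℝ} {e : E}

theorem hasFDerivAt_pencil_apply (K : E →L[ℝ] E) (z₀ : E × ℝ × ℝ) :
    HasFDerivAt (fun z : E × ℝ × ℝ ↦ pencil K z.2.1 z.2.2 z.1)
      ((pencil K z₀.2.1 z₀.2.2).coprod
        ((ContinuousLinearMap.toSpanSingleton ℝ (K z₀.1)).coprod
          (ContinuousLinearMap.toSpanSingleton ℝ (K (K z₀.1))))) z₀ := by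
  simp only [pencil_apply]
  have hu : HasFDerivAt Prod.fst (ContinuousLinearMap.fst ℝ E (ℝ × ℝ)) z₀ := hasFDerivAt_fst
  have hα : HasFDerivAt (fun z : E × ℝ × ℝ ↦ z.2.1) (.fst ℝ ℝ ℝ ∘L .snd ℝ E (ℝ × ℝ)) z₀ :=
    (.fst ℝ ℝ ℝ ∘L .snd ℝ E (ℝ × ℝ) : E × ℝ × ℝ →L[ℝ] ℝ).hasFDerivAt
  have hβ : HasFDerivAt (fun z : E × ℝ × ℝ ↦ z.2.2) (.snd ℝ ℝ ℝ ∘L .snd ℝ E (ℝ × ℝ)) z₀ :=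
    (.snd ℝ ℝ ℝ ∘L .snd ℝ E (ℝ × ℝ) : E × ℝ × ℝ →L[ℝ] ℝ).hasFDerivAt
  have hK := K.hasFDerivAt.comp z₀ hu
  have hKK := K.hasFDerivAt.comp z₀ hK
  refine ((hu.add (hα.smul hK)).add (hβ.smul hKK)).congr_fderiv ?_
  ext <;> simp

theorem IsTransversalKernelVector.exists_branch [CompleteSpace E]
    (h : IsTransversalKernelVector K α β e) {N : E × ℝ × ℝ → E} (hN : ContDiff ℝ 1 N) {k : ℕ}
    (hhom : ∀ (ε : ℝ) (z : E × ℝ × ℝ), N (ε • z.1, z.2) = ε ^ (k + 2) • N z) :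
    ∃ z : ℝ → E × ℝ × ℝ, ContDiffAt ℝ 1 z 0 ∧ z 0 = (e, α, β) ∧
      ∀ᶠ ε in 𝓝 0, pencil K (z ε).2.1 (z ε).2.2 (ε • (z ε).1) = N (ε • (z ε).1, (z ε).2) := by
  obtain ⟨W, a, b, hW⟩ := h.exists_rightInverse
  -- The equation for `ε u` divided by `ε`.
  let F : ℝ × E × ℝ × ℝ → E := fun v ↦ pencil K v.2.2.1 v.2.2.2 v.2.1 - v.1 ^ (k + 1) • N v.2
  have hF : ContDiff ℝ 1 F := by
    simp only [F, pencil_apply]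
    fun_prop
  have hF₀ : (fun z ↦ F (0, z)) = fun z ↦ pencil K z.2.1 z.2.2 z.1 := by simp [F]
  obtain ⟨z, hz, hz₀, hFz⟩ := exists_contDiffAt_zeros_of_rightInverse (p₀ := (0 : ℝ))
    (z₀ := (e, α, β)) (R := W.prod (a.prod b)) hF.contDiffAt
    ((congrFun hF₀ _).trans h.pencil_eq_zero) (hF₀ ▸ hasFDerivAt_pencil_apply K _)
    (fun f ↦ by simpa [add_assoc] using hW f)
  refine ⟨z, hz, hz₀, hFz.mono fun ε hε ↦ ?_⟩
  rw [map_smul, sub_eq_zero.1 hε, smul_smul, ← pow_succ', hhom]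

end Branch

section Primitive

variable {a b : ℝ}

/-- The Volterra operator `f ↦ ∫_p^t f` on `C([a, b], ℝ)`, for a base point `p ∈ [a, b]`. The
integrand is extended to the line by constants, which does not affect the integral. -/
noncomputable def primitive (p : Icc a b) : C(Icc a b, ℝ) →L[ℝ] C(Icc a b, ℝ) :=
  LinearMap.mkContinuous
    { toFun f := ⟨fun t ↦ ∫ s in p..t, f.IccExtend (p.2.1.trans p.2.2) s,
        (intervalIntegral.continuous_primitive
          (fun _ _ ↦ (map_continuous (f.IccExtend _)).intervalIntegrable _ _) _).comp
          continuous_subtype_val⟩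
      map_add' f g := by
        ext t
        exact intervalIntegral.integral_add
          ((map_continuous (f.IccExtend _)).intervalIntegrable p t)
          ((map_continuous (g.IccExtend _)).intervalIntegrable p t)
      map_smul' k f := by
        ext t
        exact intervalIntegral.integral_smul k (f.IccExtend _) }
    (b - a) fun f ↦ by
      have hab : 0 ≤ b - a := sub_nonneg.2 (p.2.1.trans p.2.2)
      refine (ContinuousMap.norm_le _ (by positivity)).2 fun t ↦ ?_
      calc ‖∫ s in p..t, f.IccExtend (p.2.1.trans p.2.2) s‖
          ≤ ‖f‖ * |(t : ℝ) - p| :=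
            intervalIntegral.norm_integral_le_of_norm_le_const fun s _ ↦ f.norm_coe_le_norm _
        _ ≤ (b - a) * ‖f‖ := by
            rw [mul_comm]
            gcongr
            exact abs_sub_le_of_le_of_le t.2.1 t.2.2 p.2.1 p.2.2

variable {p q : Icc a b}

theorem primitive_apply (f : C(Icc a b, ℝ)) (t : Icc a b) :
    primitive p f t = ∫ s in p..t, f.IccExtend (p.2.1.trans p.2.2) s := rfl

@[simp]
theorem primitive_apply_self (f : C(Icc a b, ℝ)) : primitive p f p = 0 :=
  intervalIntegral.integral_same

theorem primitive_apply_eq_integral {f : C(Icc a b, ℝ)} {g : ℝ → ℝ} (hg : ∀ s : Icc a b, g s = f s)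
    (t : Icc a b) : primitive p f t = ∫ s in p..t, g s := by
  refine intervalIntegral.integral_congr fun s hs ↦ ?_
  have hs' : s ∈ Icc a b := uIcc_subset_Icc p.2 t.2 hs
  exact (IccExtend_of_mem _ f hs').trans (hg ⟨s, hs'⟩).symm

theorem primitive_apply_of_hasDerivAt {f : C(Icc a b, ℝ)} {v : ℝ → ℝ}
    (hv : ∀ t : Icc a b, HasDerivAt v (f t) t) (t : Icc a b) :
    primitive p f t = v t - v p := by
  refine intervalIntegral.integral_eq_sub_of_hasDerivAt (fun s hs ↦ ?_)
    ((map_continuous (f.IccExtend _)).intervalIntegrable _ _)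
  have hs' : s ∈ Icc a b := uIcc_subset_Icc p.2 t.2 hs
  simpa [IccExtend_of_mem _ f hs'] using hv ⟨s, hs'⟩

theorem hasDerivAt_integral_IccExtend (hab : a ≤ b) (f : C(Icc a b, ℝ)) (p : ℝ) (t : Icc a b) :
    HasDerivAt (fun x ↦ ∫ s in p..x, f.IccExtend hab s) (f t) t := by
  simpa using intervalIntegral.integral_hasDerivAt_right
    ((map_continuous (f.IccExtend hab)).intervalIntegrable p t)
    ((map_continuous (f.IccExtend hab)).stronglyMeasurableAtFilter _ _)
    (map_continuous (f.IccExtend hab)).continuousAt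

theorem primitive_mul_primitive (f g : C(Icc a b, ℝ)) :
    primitive p f * primitive p g = primitive p (f * primitive p g + primitive p f * g) := by
  ext t
  have hab : a ≤ b := p.2.1.trans p.2.2
  rw [primitive_apply_of_hasDerivAt (fun t ↦
    (hasDerivAt_integral_IccExtend hab f p t).mul (hasDerivAt_integral_IccExtend hab g p t))]
  simp [primitive_apply]

theorem primitive_base_change (f : C(Icc a b, ℝ)) :
    primitive q f = primitive p f - primitive p f q • 1 := by
  ext t
  rw [primitive_apply_of_hasDerivAt (hasDerivAt_integral_IccExtend (p.2.1.trans p.2.2) f p)]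
  simp [primitive_apply]

/-- The solution operator of `w'' = f`, `w' p = 0`, `w q = 0`. -/
noncomputable def mixedInverse (p q : Icc a b) : C(Icc a b, ℝ) →L[ℝ] C(Icc a b, ℝ) :=
  primitive q ∘L primitive p

theorem mixedInverse_apply (f : C(Icc a b, ℝ)) :
    mixedInverse p q f = primitive q (primitive p f) := rfl

end Primitive

section Oscillator

variable {a b : ℝ}

/-- The solution `cos (μ (t - p))` of `c'' + μ² c = 0`, `c p = 1`, `c' p = 0`. -/
noncomputable def cosFrom (p : Icc a b) (μ : ℝ) : C(Icc a b, ℝ) :=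
  ⟨fun t ↦ cos (μ * (t - p)), by fun_prop⟩

/-- The solution `sin (μ (t - p))` of `s'' + μ² s = 0`, `s p = 0`, `s' p = μ`. -/
noncomputable def sinFrom (p : Icc a b) (μ : ℝ) : C(Icc a b, ℝ) :=
  ⟨fun t ↦ sin (μ * (t - p)), by fun_prop⟩

@[simp]
theorem cosFrom_apply (p : Icc a b) (μ : ℝ) (t : Icc a b) : cosFrom p μ t = cos (μ * (t - p)) := rfl

@[simp]
theorem sinFrom_apply (p : Icc a b) (μ : ℝ) (t : Icc a b) : sinFrom p μ t = sin (μ * (t - p)) := rfl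

variable {p q : Icc a b} {μ : ℝ}

theorem hasDerivAt_cos_mul_sub (μ p t : ℝ) :
    HasDerivAt (fun t ↦ cos (μ * (t - p))) (-(μ * sin (μ * (t - p)))) t := by
  simpa [mul_comm] using (((hasDerivAt_id t).sub_const p).const_mul μ).cos

theorem hasDerivAt_sin_mul_sub (μ p t : ℝ) :
    HasDerivAt (fun t ↦ sin (μ * (t - p))) (μ * cos (μ * (t - p))) t := by
  simpa [mul_comm] using (((hasDerivAt_id t).sub_const p).const_mul μ).sin

theorem smul_primitive_cosFrom : μ • primitive p (cosFrom p μ) = sinFrom p μ := by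
  rw [← map_smul]
  ext t
  rw [primitive_apply_of_hasDerivAt fun t ↦ hasDerivAt_sin_mul_sub μ p t]
  simp

theorem smul_primitive_sinFrom : μ • primitive p (sinFrom p μ) = 1 - cosFrom p μ := by
  rw [← map_smul]
  ext t
  rw [primitive_apply_of_hasDerivAt fun t ↦
    (hasDerivAt_cos_mul_sub μ p t).neg.congr_deriv (neg_neg _)]
  simp only [Pi.neg_apply, sub_self, mul_zero, cos_zero, sub_neg_eq_add, ContinuousMap.sub_apply,
    ContinuousMap.one_apply, cosFrom_apply]
  ring

theorem cosFrom_sq_add_sinFrom_sq : cosFrom p μ ^ 2 + sinFrom p μ ^ 2 = 1 := by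
  ext t
  simp

theorem two_mul_primitive_cosFrom_sq (t : Icc a b) :
    2 * μ * primitive p (cosFrom p μ ^ 2) t
      = μ * (t - p) + sinFrom p μ t * cosFrom p μ t := by
  have hv (t : Icc a b) : HasDerivAt
      (fun t ↦ μ * (t - p) + sin (μ * (t - p)) * cos (μ * (t - p)))
      (((2 * μ) • cosFrom p μ ^ 2) t) t := by
    refine ((((hasDerivAt_id (t : ℝ)).sub_const (p : ℝ)).const_mul μ).add
      ((hasDerivAt_sin_mul_sub μ p t).mul (hasDerivAt_cos_mul_sub μ p t))).congr_deriv ?_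
    simp only [mul_one, mul_neg, ContinuousMap.smul_apply, ContinuousMap.pow_apply, cosFrom_apply,
      smul_eq_mul]
    linear_combination -μ * sin_sq_add_cos_sq (μ * ((t : ℝ) - p))
  simpa using primitive_apply_of_hasDerivAt (p := p) hv t

theorem sq_smul_mixedInverse_cosFrom :
    μ ^ 2 • mixedInverse p q (cosFrom p μ) = cosFrom p μ q • 1 - cosFrom p μ := by
  rw [mixedInverse_apply, sq, mul_smul, ← map_smul (primitive q), smul_primitive_cosFrom,
    primitive_base_change (p := p), smul_sub, ← smul_assoc μ (primitive p _ q),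
    ← ContinuousMap.smul_apply, smul_primitive_sinFrom]
  ext t
  simp

/-- Variation of constants: the resolvent `f ↦ f - μ² v`, where `v'' + μ² v = f` and
`v p = v' p = 0`. -/
noncomputable def volterraResolvent (p : Icc a b) (μ : ℝ) : C(Icc a b, ℝ) →L[ℝ] C(Icc a b, ℝ) :=
  1 - μ • (.mul ℝ _ (sinFrom p μ) ∘L primitive p ∘L .mul ℝ _ (cosFrom p μ)
    - .mul ℝ _ (cosFrom p μ) ∘L primitive p ∘L .mul ℝ _ (sinFrom p μ))

theorem volterraResolvent_apply (f : C(Icc a b, ℝ)) :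
    volterraResolvent p μ f = f - μ • (sinFrom p μ * primitive p (cosFrom p μ * f)
      - cosFrom p μ * primitive p (sinFrom p μ * f)) := rfl

theorem primitive_volterraResolvent (f : C(Icc a b, ℝ)) :
    primitive p (volterraResolvent p μ f)
      = cosFrom p μ * primitive p (cosFrom p μ * f)
        + sinFrom p μ * primitive p (sinFrom p μ * f) := by
  set c := cosFrom p μ
  set s := sinFrom p μ
  have hJs : μ • primitive p s = 1 - c := smul_primitive_sinFrom
  have hJc : μ • primitive p c = s := smul_primitive_cosFrom
  have hcs : c ^ 2 + s ^ 2 = 1 := cosFrom_sq_add_sinFrom_sq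
  -- Integrate `c F` and `s G` by parts, writing `c = 1 - μ ∫ s` and `s = μ ∫ c`.
  have hF : c * primitive p (c * f) = primitive p (c * f)
      - μ • primitive p (s * primitive p (c * f) + primitive p s * (c * f)) := by
    rw [← primitive_mul_primitive, ← smul_mul_assoc, hJs]
    ring
  have hG : s * primitive p (s * f)
      = μ • primitive p (c * primitive p (s * f) + primitive p c * (s * f)) := by
    rw [← primitive_mul_primitive, ← smul_mul_assoc, hJc]
  rw [hF, hG, ← map_smul, ← map_sub, ← map_smul, ← map_add, volterraResolvent_apply]
  congr 1
  rw [Algebra.smul_def] at hJs hJc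
  simp only [Algebra.smul_def]
  linear_combination -f * hcs + c * f * hJs - s * f * hJc

theorem sq_smul_primitive_primitive_volterraResolvent (f : C(Icc a b, ℝ)) :
    μ ^ 2 • primitive p (primitive p (volterraResolvent p μ f)) = f - volterraResolvent p μ f := by
  set c := cosFrom p μ
  set s := sinFrom p μ
  have hJs : μ • primitive p s = 1 - c := smul_primitive_sinFrom
  have hJc : μ • primitive p c = s := smul_primitive_cosFrom
  have hF : s * primitive p (c * f)
      = μ • primitive p (c * primitive p (c * f) + primitive p c * (c * f)) := by
    rw [← primitive_mul_primitive, ← smul_mul_assoc, hJc]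
  have hG : c * primitive p (s * f) = primitive p (s * f)
      - μ • primitive p (s * primitive p (s * f) + primitive p s * (s * f)) := by
    rw [← primitive_mul_primitive, ← smul_mul_assoc, hJs]
    ring
  have hint : μ • primitive p (c * primitive p (c * f) + s * primitive p (s * f))
      = s * primitive p (c * f) - c * primitive p (s * f) := by
    rw [hF, hG]
    simp only [← map_smul, ← map_sub]
    congr 1
    rw [Algebra.smul_def] at hJs hJc
    simp only [Algebra.smul_def]
    linear_combination -c * f * hJc - s * f * hJs
  rw [primitive_volterraResolvent, sq, mul_smul, hint, volterraResolvent_apply, sub_sub_cancel]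

/-- `f ↦ μ² v(q)`, where `v'' + μ² v = f` and `v p = v' p = 0`: the obstruction to solving the
mixed problem `w'' + μ² w = f`, `w' p = 0`, `w q = 0` by `v`. -/
noncomputable def endpointDefect (p q : Icc a b) (μ : ℝ) : C(Icc a b, ℝ) →L[ℝ] ℝ :=
  ContinuousMap.evalCLM ℝ q ∘L (1 - volterraResolvent p μ)

theorem endpointDefect_apply (f : C(Icc a b, ℝ)) :
    endpointDefect p q μ f = f q - volterraResolvent p μ f q := rfl

theorem one_add_smul_mixedInverse_volterraResolvent (f : C(Icc a b, ℝ)) :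
    (1 + μ ^ 2 • mixedInverse p q) (volterraResolvent p μ f) = f - endpointDefect p q μ f • 1 := by
  have hdefect := sq_smul_primitive_primitive_volterraResolvent (p := p) (μ := μ) f
  have hdefect_q : μ ^ 2 • primitive p (primitive p (volterraResolvent p μ f)) q
      = endpointDefect p q μ f := congrArg (fun g : C(Icc a b, ℝ) ↦ g q) hdefect
  rw [← hdefect_q, add_apply, one_apply_eq_self, smul_apply, mixedInverse_apply,
    primitive_base_change (p := p), smul_sub, hdefect, smul_assoc]
  abel

theorem one_add_smul_mixedInverse_cosFrom :
    (1 + μ ^ 2 • mixedInverse p q) (cosFrom p μ) = cosFrom p μ q • 1 := by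
  rw [add_apply, one_apply_eq_self, smul_apply, sq_smul_mixedInverse_cosFrom, add_sub_cancel]

theorem exists_rightInverse_one_add_smul_mixedInverse (h : cos (μ * (q - p)) ≠ 0) :
    ∃ R : C(Icc a b, ℝ) →L[ℝ] C(Icc a b, ℝ), ∀ f, (1 + μ ^ 2 • mixedInverse p q) (R f) = f := by
  refine ⟨volterraResolvent p μ
    + ((cos (μ * (q - p)))⁻¹ • endpointDefect p q μ).smulRight (cosFrom p μ), fun f ↦ ?_⟩
  rw [add_apply (volterraResolvent p μ), map_add, one_add_smul_mixedInverse_volterraResolvent,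
    ContinuousLinearMap.smulRight_apply, map_smul, one_add_smul_mixedInverse_cosFrom, smul_smul,
    smul_apply, smul_eq_mul, cosFrom_apply, mul_right_comm, inv_mul_cancel₀ h, one_mul,
    sub_add_cancel]

theorem endpointDefect_cosFrom_ne_zero (h : cos (μ * (q - p)) = 0) :
    endpointDefect p q μ (cosFrom p μ) ≠ 0 := by
  have hμ : μ * (q - p) ≠ 0 := fun h₀ ↦ by simp [h₀] at h
  have hsin : sin (μ * (q - p)) ≠ 0 := fun h₀ ↦ by
    simpa [h, h₀] using sin_sq_add_cos_sq (μ * ((q : ℝ) - p))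
  have hcos_sq : 2 * μ * primitive p (cosFrom p μ ^ 2) q = μ * (q - p) := by
    rw [two_mul_primitive_cosFrom_sq, cosFrom_apply, h, mul_zero, add_zero]
  have hvalue : endpointDefect p q μ (cosFrom p μ)
      = sin (μ * (q - p)) * (μ * primitive p (cosFrom p μ ^ 2) q) := by
    rw [endpointDefect_apply, volterraResolvent_apply, ← sq]
    simp only [cosFrom_apply, h, ContinuousMap.sub_apply, ContinuousMap.smul_apply,
      ContinuousMap.mul_apply, sinFrom_apply, smul_eq_mul]
    ring
  have htwice : 2 * endpointDefect p q μ (cosFrom p μ) = sin (μ * (q - p)) * (μ * (q - p)) := by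
    linear_combination 2 * hvalue + sin (μ * (q - p)) * hcos_sq
  exact right_ne_zero_of_mul (htwice ▸ mul_ne_zero hsin hμ)

theorem isSplitKernelVector_cosFrom (h : cos (μ * (q - p)) = 0) :
    IsSplitKernelVector (mixedInverse p q) (μ ^ 2) (cosFrom p μ) where
  ne_zero h₀ := by simpa using congrArg (fun f : C(Icc a b, ℝ) ↦ f p) h₀
  add_smul_eq_zero := by rw [one_add_smul_mixedInverse_cosFrom, cosFrom_apply, h, zero_smul]
  exists_rightInverse := by
    set ψ := endpointDefect p q μ
    let φ : C(Icc a b, ℝ) →L[ℝ] ℝ := (ψ (cosFrom p μ))⁻¹ • ψ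
    refine ⟨volterraResolvent p μ ∘L (1 - φ.smulRight (cosFrom p μ)), φ, fun f ↦ ?_⟩
    have hsolvable : ψ (f - φ f • cosFrom p μ) = 0 := by
      rw [map_sub, map_smul, smul_apply, smul_eq_mul, smul_eq_mul, mul_right_comm,
        inv_mul_cancel₀ (endpointDefect_cosFrom_ne_zero h), one_mul, sub_self]
    have happly : (1 - φ.smulRight (cosFrom p μ)) f = f - φ f • cosFrom p μ := rfl
    rw [ContinuousLinearMap.comp_apply, happly, one_add_smul_mixedInverse_volterraResolvent,
      hsolvable, zero_smul, sub_zero]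

theorem exists_isTransversalKernelVector_mixedInverse (hμ : cos (μ * (q - p)) = 0) (ν : ℝ) :
    ∃ e, IsTransversalKernelVector (mixedInverse p q) (μ ^ 2 + ν ^ 2) (μ ^ 2 * ν ^ 2) e := by
  have sq_ne_zero_of_resonant {κ : ℝ} (hκ : cos (κ * (q - p)) = 0) : κ ^ 2 ≠ 0 :=
    pow_ne_zero 2 fun h₀ ↦ by simp [h₀] at hκ
  have hc := isSplitKernelVector_cosFrom hμ
  have hμ₀ := sq_ne_zero_of_resonant hμ
  by_cases hν : cos (ν * (q - p)) = 0
  · rcases eq_or_ne (μ ^ 2) (ν ^ 2) with hμν | hμν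
    · exact ⟨_, by rw [← hμν]; exact hc.isTransversal_self hμ₀⟩
    · exact ⟨_, hc.isTransversal_add (isSplitKernelVector_cosFrom hν) hμ₀
        (sq_ne_zero_of_resonant hν) hμν⟩
  · obtain ⟨R, hR⟩ := exists_rightInverse_one_add_smul_mixedInverse hν
    exact ⟨_, hc.isTransversal_of_rightInverse hμ₀ hR⟩

end Oscillator

section Rod

variable {a b : ℝ} {p q : Icc a b}

theorem exists_contDiff_succ_primitive {n : ℕ} {f : C(Icc a b, ℝ)} {g : ℝ → ℝ}
    (hg : ContDiff ℝ n g) (hgf : ∀ s : Icc a b, g s = f s) (p : Icc a b) :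
    ∃ G : ℝ → ℝ, ContDiff ℝ (n + 1) G ∧ deriv G = g ∧ ∀ s : Icc a b, G s = primitive p f s := by
  have hG : ∀ t, HasDerivAt (fun t ↦ ∫ s in p..t, g s) (g t) t := fun t ↦
    hg.continuous.integral_hasStrictDerivAt p t |>.hasDerivAt
  have hderiv : deriv (fun t ↦ ∫ s in p..t, g s) = g := funext fun t ↦ (hG t).deriv
  refine ⟨fun t ↦ ∫ s in p..t, g s, contDiff_succ_iff_deriv.2 ⟨fun t ↦ (hG t).differentiableAt,
    by simp, by rwa [hderiv]⟩, hderiv, fun s ↦ (primitive_apply_eq_integral hgf s).symm⟩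

theorem exists_contDiff_four_mixedInverse (p q : Icc a b) (u : C(Icc a b, ℝ)) :
    ∃ x : ℝ → ℝ, ContDiff ℝ 4 x ∧ ∀ s : Icc a b,
      x s = mixedInverse p q (mixedInverse p q u) s ∧
      iteratedDeriv 1 x s = primitive p (mixedInverse p q u) s ∧
      iteratedDeriv 2 x s = mixedInverse p q u s ∧
      iteratedDeriv 3 x s = primitive p u s ∧ iteratedDeriv 4 x s = u s := by
  have hab : a ≤ b := p.2.1.trans p.2.2
  obtain ⟨x₃, hx₃, hd₄, h₃⟩ := exists_contDiff_succ_primitive (n := 0) (f := u)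
    (contDiff_zero.2 (map_continuous (u.IccExtend hab))) (fun s ↦ by simp) p
  obtain ⟨x₂, hx₂, hd₃, h₂⟩ := exists_contDiff_succ_primitive (n := 1) hx₃ h₃ q
  obtain ⟨x₁, hx₁, hd₂, h₁⟩ := exists_contDiff_succ_primitive (n := 2) hx₂ h₂ p
  obtain ⟨x, hx, hd₁, h₀⟩ := exists_contDiff_succ_primitive (n := 3) hx₁ h₁ q
  refine ⟨x, hx, fun s ↦ ⟨h₀ s, ?_⟩⟩
  simp only [iteratedDeriv_succ', iteratedDeriv_zero, hd₁, hd₂, hd₃, hd₄]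
  exact ⟨h₁ s, h₂ s, h₃ s, by simp⟩

/-- The right-hand side of the rod equation in terms of `u = x''''`: for `z = (u, α, β)` the
derivatives of `x = K² u`, with `K` the `mixedInverse`, are `x' = ∫_p K u`, `x'' = K u` and
`x''' = ∫_p u`. -/
noncomputable def rodNonlinearity (p q : Icc a b) (γ : ℝ) (z : C(Icc a b, ℝ) × ℝ × ℝ) :
    C(Icc a b, ℝ) :=
  γ • mixedInverse p q (mixedInverse p q z.1) ^ 3 + (3 : ℝ) • mixedInverse p q z.1 ^ 3
    + (12 : ℝ) • (primitive p (mixedInverse p q z.1) * mixedInverse p q z.1 * primitive p z.1)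
    + (3 : ℝ) • (primitive p (mixedInverse p q z.1) ^ 2
        * (z.1 - (z.2.1 / 2) • mixedInverse p q z.1))

theorem contDiff_rodNonlinearity (p q : Icc a b) (γ : ℝ) :
    ContDiff ℝ 1 (rodNonlinearity p q γ) := by
  unfold rodNonlinearity
  fun_prop

theorem rodNonlinearity_smul (γ ε : ℝ) (z : C(Icc a b, ℝ) × ℝ × ℝ) :
    rodNonlinearity p q γ (ε • z.1, z.2) = ε ^ 3 • rodNonlinearity p q γ z := by
  ext t
  simp only [rodNonlinearity, map_smul, ContinuousMap.add_apply, ContinuousMap.sub_apply,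
    ContinuousMap.smul_apply, ContinuousMap.mul_apply, ContinuousMap.pow_apply, smul_eq_mul]
  ring

/-- The nontrivial solutions `(x, α, β, γ)` of the rod equation on `[a, b]` with positive
parameters and `x' p = x''' p = 0`, `x q = x'' q = 0`. -/
def nontrivialRodSolutions (p q : Icc a b) : Set (C(Icc a b, ℝ) × (ℝ × ℝ × ℝ)) :=
  {P | 0 < P.2.1 ∧ 0 < P.2.2.1 ∧ 0 < P.2.2.2 ∧
    ∃ x : ℝ → ℝ, ContDiff ℝ 4 x ∧
      (∀ s : Icc a b, P.1 s = x s) ∧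
      (∃ s ∈ Icc a b, x s ≠ 0) ∧
      iteratedDeriv 1 x p = 0 ∧ iteratedDeriv 3 x p = 0 ∧
      x q = 0 ∧ iteratedDeriv 2 x q = 0 ∧
      ∀ s ∈ Icc a b,
        iteratedDeriv 4 x s + P.2.1 * iteratedDeriv 2 x s + P.2.2.1 * x s
          - P.2.2.2 * (x s) ^ 3 - 3 * (iteratedDeriv 2 x s) ^ 3
          - 12 * iteratedDeriv 1 x s * iteratedDeriv 2 x s * iteratedDeriv 3 x s
          - 3 * (iteratedDeriv 1 x s) ^ 2 *
              (iteratedDeriv 4 x s - (P.2.1 / 2) * iteratedDeriv 2 x s) = 0}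

theorem zero_notMem_nontrivialRodSolutions (Λ : ℝ × ℝ × ℝ) :
    (0, Λ) ∉ nontrivialRodSolutions p q := by
  rintro ⟨-, -, -, x, -, hx, ⟨s, hs, hxs⟩, -⟩
  exact hxs (hx ⟨s, hs⟩).symm

theorem mem_nontrivialRodSolutions_of_pencil {u : C(Icc a b, ℝ)} {α β γ : ℝ} (hα : 0 < α)
    (hβ : 0 < β) (hγ : 0 < γ) (hu : mixedInverse p q (mixedInverse p q u) ≠ 0)
    (heq : pencil (mixedInverse p q) α β u = rodNonlinearity p q γ (u, α, β)) :
    (mixedInverse p q (mixedInverse p q u), α, β, γ) ∈ nontrivialRodSolutions p q := by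
  obtain ⟨x, hx, hderivs⟩ := exists_contDiff_four_mixedInverse p q u
  obtain ⟨s, hs⟩ := DFunLike.ne_iff.1 hu
  obtain ⟨-, hp₁, -, hp₃, -⟩ := hderivs p
  obtain ⟨hq₀, -, hq₂, -⟩ := hderivs q
  rw [primitive_apply_self] at hp₁ hp₃
  rw [mixedInverse_apply, primitive_apply_self] at hq₀ hq₂
  refine ⟨hα, hβ, hγ, x, hx, fun s ↦ (hderivs s).1.symm, ⟨s, s.2, (hderivs s).1 ▸ hs⟩, hp₁, hp₃,
    hq₀, hq₂, fun s hs ↦ ?_⟩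
  obtain ⟨h₀, h₁, h₂, h₃, h₄⟩ := hderivs ⟨s, hs⟩
  have heq_s := congrArg (fun f : C(Icc a b, ℝ) ↦ f ⟨s, hs⟩) heq
  simp only [rodNonlinearity, pencil_apply, ContinuousMap.add_apply, ContinuousMap.sub_apply,
    ContinuousMap.smul_apply, ContinuousMap.mul_apply, ContinuousMap.pow_apply, smul_eq_mul]
    at heq_s
  rw [h₀, h₁, h₂, h₃, h₄]
  linear_combination heq_s

theorem exists_isConnected_nontrivialRodSolutions {μ ν α β γ : ℝ} (hμ : cos (μ * (q - p)) = 0)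
    (hsum : α = μ ^ 2 + ν ^ 2) (hprod : β = μ ^ 2 * ν ^ 2) (hα : 0 < α) (hβ : 0 < β) (hγ : 0 < γ) :
    ∃ C : Set (C(Icc a b, ℝ) × (ℝ × ℝ × ℝ)), IsConnected C ∧ (0, α, β, γ) ∈ C ∧
      C \ {(0, α, β, γ)} ⊆ nontrivialRodSolutions p q ∧ C ≠ {(0, α, β, γ)} := by
  obtain ⟨e, he⟩ := exists_isTransversalKernelVector_mixedInverse hμ ν
  rw [← hsum, ← hprod] at he
  obtain ⟨z, hz, hz₀, hbranch⟩ :=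
    he.exists_branch (contDiff_rodNonlinearity p q γ) (k := 1) (rodNonlinearity_smul γ)
  set K := mixedInverse p q
  let Γ : ℝ → C(Icc a b, ℝ) × (ℝ × ℝ × ℝ) := fun ε ↦
    (K (K (ε • (z ε).1)), (z ε).2.1, (z ε).2.2, γ)
  have hΓ₀ : Γ 0 = (0, α, β, γ) := by simp [Γ, hz₀]
  have hcont : ∀ᶠ ε in 𝓝 0, ContinuousAt Γ ε := by
    filter_upwards [hz.eventually (by simp)] with ε hε
    have := hε.continuousAt
    fun_prop
  have hpos : ∀ᶠ ε in 𝓝 0, 0 < (z ε).2.1 ∧ 0 < (z ε).2.2 ∧ K (K (z ε).1) ≠ 0 := by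
    have hz' := hz.continuousAt
    refine (ContinuousAt.eventually_lt (by fun_prop) (by fun_prop) (by simpa [hz₀])).and
      ((ContinuousAt.eventually_lt (by fun_prop) (by fun_prop) (by simpa [hz₀])).and
        (ContinuousAt.eventually_ne (by fun_prop) (by simpa [hz₀] using he.apply_apply_ne_zero)))
  have hmem : ∀ᶠ ε in 𝓝[≠] 0, Γ ε ∈ nontrivialRodSolutions p q := by
    filter_upwards [(hpos.and hbranch).filter_mono nhdsWithin_le_nhds, self_mem_nhdsWithin]
      with ε ⟨⟨hα', hβ', hne⟩, heq⟩ hε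
    refine mem_nontrivialRodSolutions_of_pencil hα' hβ' hγ ?_ heq
    simpa only [map_smul] using smul_ne_zero hε hne
  simpa only [hΓ₀] using exists_isConnected_of_eventually_mem hcont hmem
    (hΓ₀ ▸ zero_notMem_nontrivialRodSolutions _)

end Rod

theorem cos_pi_div_mul_quarter_odd {r : ℝ} (hr : r ≠ 0) (m : ℕ) :
    cos (π / r * ((2 * m - 1) / 4) * (r - -r)) = 0 := by
  refine cos_eq_zero_iff.2 ⟨m - 1, ?_⟩
  push_cast
  field_simp
  ring

theorem exists_eq_add_sq_and_eq_mul_sq {α β s : ℝ} (hs : 0 ≤ s) (hβ : 0 < β) (h : β = s * (α - s)) :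
    ∃ ν, α = s + ν ^ 2 ∧ β = s * ν ^ 2 := by
  have hpos : 0 < α - s := pos_of_mul_pos_right (h ▸ hβ) hs
  have hν : √(α - s) ^ 2 = α - s := sq_sqrt hpos.le
  exact ⟨√(α - s), by rw [hν]; ring, by rw [hν, h]⟩

/-- Every point of the trivial family where the linearization has nontrivial
kernel is a branching point: a continuum of nontrivial solutions emanates from
`(0,α₀,β₀,γ₀)` in `C([-r,r],ℝ) × ℝ³`. -/
theorem stmt_17 (r : ℝ) (hr : 0 < r)
    (c : ℕ → ℝ)
    (hc : ∀ m : ℕ, c m = -(π / r) ^ 2 * ((2 * (m : ℝ) - 1) / 4) ^ 2)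
    (α₀ β₀ γ₀ : ℝ) (hα₀ : 0 < α₀) (hβ₀ : 0 < β₀) (hγ₀ : 0 < γ₀)
    (m : ℕ) (hm : 1 ≤ m) (hray : β₀ = -(c m) * α₀ - (c m) ^ 2)
    (S : Set (C(Icc (-r) r, ℝ) × (ℝ × ℝ × ℝ)))
    (hS : S = {p : C(Icc (-r) r, ℝ) × (ℝ × ℝ × ℝ) |
      0 < p.2.1 ∧ 0 < p.2.2.1 ∧ 0 < p.2.2.2 ∧
      ∃ x : ℝ → ℝ, ContDiff ℝ 4 x ∧
        (∀ s : Icc (-r) r, p.1 s = x s) ∧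
        (∃ s ∈ Icc (-r) r, x s ≠ 0) ∧
        iteratedDeriv 1 x (-r) = 0 ∧ iteratedDeriv 3 x (-r) = 0 ∧
        x r = 0 ∧ iteratedDeriv 2 x r = 0 ∧
        ∀ s ∈ Icc (-r) r,
          iteratedDeriv 4 x s + p.2.1 * iteratedDeriv 2 x s + p.2.2.1 * x s
            - p.2.2.2 * (x s) ^ 3 - 3 * (iteratedDeriv 2 x s) ^ 3
            - 12 * iteratedDeriv 1 x s * iteratedDeriv 2 x s * iteratedDeriv 3 x s
            - 3 * (iteratedDeriv 1 x s) ^ 2 *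
                (iteratedDeriv 4 x s - (p.2.1 / 2) * iteratedDeriv 2 x s) = 0}) :
    ∃ C : Set (C(Icc (-r) r, ℝ) × (ℝ × ℝ × ℝ)),
      IsConnected C ∧
      ((0 : C(Icc (-r) r, ℝ)), (α₀, β₀, γ₀)) ∈ C ∧
      C \ {((0 : C(Icc (-r) r, ℝ)), (α₀, β₀, γ₀))} ⊆ S ∧
      C ≠ {((0 : C(Icc (-r) r, ℝ)), (α₀, β₀, γ₀))} := by
  have hr' : -r ≤ r := neg_le_self hr.le
  set μ := π / r * ((2 * m - 1) / 4) with hμ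
  have hcm : c m = -μ ^ 2 := by rw [hc, hμ]; ring
  obtain ⟨ν, hsum, hprod⟩ := exists_eq_add_sq_and_eq_mul_sq (α := α₀) (s := μ ^ 2) (sq_nonneg μ) hβ₀
    (by rw [hray, hcm]; ring)
  subst hS
  exact exists_isConnected_nontrivialRodSolutions (p := ⟨-r, left_mem_Icc.2 hr'⟩)
    (q := ⟨r, right_mem_Icc.2 hr'⟩) (cos_pi_div_mul_quarter_odd hr.ne' m) hsum hprod hα₀ hβ₀ hγ₀
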